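/- arXiv:0709.0184 — 7 statements merged into one kernel-verified Lean document; each statement's English description precedes it below -/
import Mathlib

section
/- Let n ≥ 1 and let A, B be real symmetric (n+1)×(n+1) matrices with Q(A) = Q(B) > 0 and with A₀₀ > 0 and B₀₀ > 0. Then for every s ∈ [0,1], Q(sA + (1−s)B) ≥ Q(A). -/
/-!
`Qform` is a quadratic form, so with `v`, `w` the off-diagonal parts of the first rows of `A`, `B`
and `T`, `S` their remaining diagonal sums,
`Q(sA + (1-s)B) = s² Q(A) + (1-s)² Q(B) + s(1-s) (A₀₀ S + B₀₀ T - 2 v·w)`.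
It therefore suffices to prove the reversed Cauchy–Schwarz bound `A₀₀ S + B₀₀ T - 2 v·w ≥ 2q`, where
`q` is the common value of `Q`. Multiplying by `A₀₀ B₀₀ > 0` turns the left side into
`q (A₀₀² + B₀₀²) + |A₀₀ w - B₀₀ v|²`, which is at least `2 A₀₀ B₀₀ q`.
-/

/-- `Q(A) = A₀₀ · (Σᵢ₌₁ⁿ Aᵢᵢ) − Σᵢ₌₁ⁿ A₀ᵢ²` for a real `(n+1)×(n+1)` matrix,
indexed so that row/column `0` is distinguished and `i.succ` runs over `1,…,n`. -/
noncomputable def Qform {n : ℕ} (A : Matrix (Fin (n + 1)) (Fin (n + 1)) ℝ) : ℝ :=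
  A 0 0 * (∑ i : Fin n, A i.succ i.succ) - ∑ i : Fin n, (A 0 i.succ) ^ 2

/-- If `A`, `B` are real symmetric matrices with `Q(A) = Q(B) > 0` and `A₀₀, B₀₀ > 0`,
then `Q(sA + (1−s)B) ≥ Q(A)` for every `s ∈ [0,1]`. -/
theorem Qform_convex {n : ℕ} (hn : 1 ≤ n)
    (A B : Matrix (Fin (n + 1)) (Fin (n + 1)) ℝ)
    (hAsymm : A.IsSymm) (hBsymm : B.IsSymm)
    (hQ : Qform A = Qform B) (hQpos : 0 < Qform A)
    (hA00 : 0 < A 0 0) (hB00 : 0 < B 0 0) :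
    ∀ s ∈ Set.Icc (0 : ℝ) 1, Qform A ≤ Qform (s • A + (1 - s) • B) := by
  rintro s ⟨hs0, hs1⟩
  -- Everything is expressed through `A₀₀`, `B₀₀`, `T`, `S`, `|v|²`, `|w|²` and `v·w`.
  have hN : 0 ≤ ∑ i : Fin n, (A 0 0 * B 0 i.succ - B 0 0 * A 0 i.succ) ^ 2 :=
    Finset.sum_nonneg fun i _ => sq_nonneg _
  have hNexp : ∑ i : Fin n, (A 0 0 * B 0 i.succ - B 0 0 * A 0 i.succ) ^ 2
      = A 0 0 ^ 2 * ∑ i : Fin n, B 0 i.succ ^ 2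
        - 2 * A 0 0 * B 0 0 * ∑ i : Fin n, A 0 i.succ * B 0 i.succ
        + B 0 0 ^ 2 * ∑ i : Fin n, A 0 i.succ ^ 2 := by
    simp only [Finset.mul_sum, ← Finset.sum_sub_distrib, ← Finset.sum_add_distrib]
    exact Finset.sum_congr rfl fun i _ => by ring
  have hTexp : ∑ i : Fin n, (s * A i.succ i.succ + (1 - s) * B i.succ i.succ)
      = s * ∑ i : Fin n, A i.succ i.succ + (1 - s) * ∑ i : Fin n, B i.succ i.succ := by
    simp only [Finset.mul_sum, ← Finset.sum_add_distrib]
  have hVexp : ∑ i : Fin n, (s * A 0 i.succ + (1 - s) * B 0 i.succ) ^ 2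
      = s ^ 2 * ∑ i : Fin n, A 0 i.succ ^ 2
        + 2 * s * (1 - s) * ∑ i : Fin n, A 0 i.succ * B 0 i.succ
        + (1 - s) ^ 2 * ∑ i : Fin n, B 0 i.succ ^ 2 := by
    simp only [Finset.mul_sum, ← Finset.sum_add_distrib]
    exact Finset.sum_congr rfl fun i _ => by ring
  rw [hNexp] at hN
  simp only [Qform, Matrix.add_apply, Matrix.smul_apply, smul_eq_mul] at hQ hQpos ⊢
  rw [hTexp, hVexp]
  generalize A 0 0 = a at *
  generalize B 0 0 = b at *
  generalize ∑ i : Fin n, A i.succ i.succ = T at *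
  generalize ∑ i : Fin n, B i.succ i.succ = S at *
  generalize ∑ i : Fin n, A 0 i.succ ^ 2 = V at *
  generalize ∑ i : Fin n, B 0 i.succ ^ 2 = W at *
  generalize ∑ i : Fin n, A 0 i.succ * B 0 i.succ = P at *
  have key : 0 ≤ a * S + b * T - 2 * P - 2 * (a * T - V) := by
    refine nonneg_of_mul_nonneg_right ?_ (mul_pos hA00 hB00)
    have h : a * b * (a * S + b * T - 2 * P - 2 * (a * T - V))
        = (a * T - V) * (a - b) ^ 2 + (a ^ 2 * W - 2 * a * b * P + b ^ 2 * V) := by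
      linear_combination (-a ^ 2) * hQ
    rw [h]
    exact add_nonneg (mul_nonneg hQpos.le (sq_nonneg _)) hN
  have hk := mul_nonneg (mul_nonneg hs0 (sub_nonneg.2 hs1)) key
  linear_combination hk + (1 - s) ^ 2 * hQ
end

section
/- Fix n ≥ 1 and ε > 0. Let φ₀, φ₁ : ℝⁿ → ℝ be smooth ℤⁿ-periodic functions. Suppose Φ and Ψ are two smooth functions on ℝⁿ × [0,1], ℤⁿ-periodic in the first variable, such that each of Φ, Ψ satisfies: (i) 1 + Σᵢ₌₁ⁿ ∂²/∂xᵢ² > 0 everywhere (i.e. 1 − Δ_X Φ > 0 for the positive Laplacian Δ_X = −Σᵢ ∂ᵢ² of the flat torus), (ii) q(Φ) = ε everywhere, and (iii) Φ(x,0) = φ₀(x), Φ(x,1) = φ₁(x). Then Φ = Ψ. (Uniqueness of the solution of the Dirichlet problem for the Φ-equation on the flat torus X = ℝⁿ/ℤⁿ.) -/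
/-!
Uniqueness follows from the maximum principle. Suppose `Φ > Ψ` somewhere and put
`F = Φ - Ψ + δ (t² - t)` with `δ > 0` small enough for `F` to be positive somewhere. By periodicity
`F` attains its maximum over `ℝⁿ × [0,1]`, and since `F = 0` for `t = 0, 1` this happens at an
interior point (`exists_interior_isLocalMax`). There the Hessian of `F` is negative semidefinite
(`IsLocalMax.fderiv_fderiv_nonpos`); restricting it to the planes spanned by `eᵢ` and `∂ₜ` and
summing over `i` shows that the triple `(∂ₜ²F, ΣF_ii, ∇∂ₜF)` is the negative of a point of the closed
Lorentz cone `{a, b ≥ 0, |c|² ≤ ab}`. Since `q` is the Lorentz quadratic form of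
`(∂ₜ²Φ, 1 + ΣΦ_ii, ∇∂ₜΦ)`, which lies in the open cone because `q(Φ) = ε > 0` and
`1 + ΣΦ_ii > 0`, and since the form pairs points of the cone nonnegatively, passing from `Φ` to `Ψ`
increases `q` by at least `2δ (1 + ΣΦ_ii) > 0` (`lorentz_lt`), contradicting `q(Φ) = q(Ψ)`.
-/

/-- The `t`-partial derivative of a function on `ℝⁿ × ℝ`. -/
noncomputable def pdt {n : ℕ} (Φ : (Fin n → ℝ) × ℝ → ℝ) (p : (Fin n → ℝ) × ℝ) : ℝ :=
  fderiv ℝ Φ p (0, 1)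

/-- The `xᵢ`-partial derivative of a function on `ℝⁿ × ℝ`. -/
noncomputable def pdx {n : ℕ} (i : Fin n) (Φ : (Fin n → ℝ) × ℝ → ℝ)
    (p : (Fin n → ℝ) × ℝ) : ℝ :=
  fderiv ℝ Φ p (Pi.single i 1, 0)

/-- The nonlinear operator
`q(Φ) = ∂ₜ²Φ · (1 + Σᵢ ∂ᵢ²Φ) − Σᵢ (∂ᵢ∂ₜΦ)²`. -/
noncomputable def qOp {n : ℕ} (Φ : (Fin n → ℝ) × ℝ → ℝ) (p : (Fin n → ℝ) × ℝ) : ℝ :=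
  pdt (pdt Φ) p * (1 + ∑ i : Fin n, pdx i (pdx i Φ) p) - ∑ i : Fin n, (pdx i (pdt Φ) p) ^ 2

/-- `ℤⁿ`-periodicity in the `x`-variable. -/
def ZnPeriodic {n : ℕ} (Φ : (Fin n → ℝ) × ℝ → ℝ) : Prop :=
  ∀ (k : Fin n → ℤ) (x : Fin n → ℝ) (t : ℝ), Φ (x + fun i => (k i : ℝ), t) = Φ (x, t)

/-! ### Monotonicity of the Lorentz form -/

/-- Adding `(α, β, k)` from the closed Lorentz cone and `(d, 0, 0)`, `d > 0`, to a point `(A, B, c)`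
of the open cone strictly increases the form `A B - |c|²`. -/
lemma lorentz_lt {n : ℕ} {A B α β d : ℝ} {c k : Fin n → ℝ} (hB : 0 < B)
    (hAB : 0 < A * B - ∑ i, c i ^ 2) (hα : 0 ≤ α) (hβ : 0 ≤ β) (hd : 0 < d)
    (hk : ∑ i, k i ^ 2 ≤ α * β) :
    A * B - ∑ i, c i ^ 2 < (A + α + d) * (B + β) - ∑ i, (c i + k i) ^ 2 := by
  have hc0 : 0 ≤ ∑ i, c i ^ 2 := Finset.sum_nonneg fun i _ => sq_nonneg _
  have hk0 : 0 ≤ ∑ i, k i ^ 2 := Finset.sum_nonneg fun i _ => sq_nonneg _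
  have hA : 0 < A := pos_of_mul_pos_left (by linarith : 0 < A * B) hB.le
  have hCS := Finset.sum_mul_sq_le_sq_mul_sq Finset.univ c k
  have hexp : ∑ i, (c i + k i) ^ 2
      = ∑ i, c i ^ 2 + 2 * ∑ i, c i * k i + ∑ i, k i ^ 2 := by
    rw [Finset.mul_sum, ← Finset.sum_add_distrib, ← Finset.sum_add_distrib]
    exact Finset.sum_congr rfl fun i _ => by ring
  have hprod : (∑ i, c i ^ 2) * ∑ i, k i ^ 2 ≤ (A * B) * (α * β) :=
    mul_le_mul (by linarith) hk hk0 (by nlinarith)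
  have hnn : 0 ≤ A * β + B * α := by positivity
  -- arithmetic-geometric mean: `A B α β ≤ ((A β + B α) / 2)²`
  have hpair : 2 * ∑ i, c i * k i ≤ A * β + B * α := by
    apply le_of_sq_le_sq _ hnn
    nlinarith [sq_nonneg (A * β - B * α)]
  rw [hexp]
  nlinarith [mul_pos hd hB, mul_nonneg hd.le hβ]

/-! ### Second-order condition at a local maximum -/

/-- Second-order necessary condition for a local maximum on the real line. -/
lemma deriv_deriv_nonpos_of_isLocalMax {g : ℝ → ℝ} {a : ℝ} (hc : ContinuousAt g a)
    (h : IsLocalMax g a) : deriv (deriv g) a ≤ 0 := by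
  by_contra! hpos
  have hmin : IsLocalMin g a := isLocalMin_of_deriv_deriv_pos hpos h.deriv_eq_zero hc
  -- `g` is both locally maximal and locally minimal at `a`, hence constant near `a`
  have hconst : g =ᶠ[nhds a] fun _ => g a := by
    filter_upwards [h, hmin] with y h1 h2 using le_antisymm h1 h2
  have := hconst.deriv.deriv_eq
  simp at this
  linarith

lemma IsLocalMax.fderiv_fderiv_nonpos {E : Type*} [NormedAddCommGroup E] [NormedSpace ℝ E]
    {G : E → ℝ} (hG : ContDiff ℝ (⊤ : ℕ∞) G) {p : E} (h : IsLocalMax G p) (v : E) :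
    fderiv ℝ (fun q => fderiv ℝ G q v) p v ≤ 0 := by
  have hline : ∀ s : ℝ, HasDerivAt (fun s : ℝ => p + s • v) v s := fun s => by
    simpa using ((hasDerivAt_id s).smul_const v).const_add p
  have hd1 : Differentiable ℝ G := hG.differentiable (by simp)
  have hd2 : Differentiable ℝ (fun q => fderiv ℝ G q v) :=
    ((hG.fderiv_right (m := (⊤ : ℕ∞)) (by simp)).clm_apply contDiff_const).differentiable (by simp)
  have h1 : deriv (fun s : ℝ => G (p + s • v)) = fun s => fderiv ℝ G (p + s • v) v := by
    funext s
    exact ((hd1 _).hasFDerivAt.comp_hasDerivAt s (hline s)).deriv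
  have h2 : deriv (fun s : ℝ => fderiv ℝ G (p + s • v) v) 0
      = fderiv ℝ (fun q => fderiv ℝ G q v) p v := by
    have := ((hd2 (p + (0 : ℝ) • v)).hasFDerivAt.comp_hasDerivAt 0 (hline 0)).deriv
    simpa [Function.comp_def] using this
  have hcont : ContinuousAt (fun s : ℝ => p + s • v) 0 := (hline 0).continuousAt
  have hmax : IsLocalMax (fun s : ℝ => G (p + s • v)) 0 := by
    have ht : Filter.Tendsto (fun s : ℝ => p + s • v) (nhds 0) (nhds p) := by
      simpa [ContinuousAt] using hcont
    simpa [IsLocalMax, IsMaxFilter] using ht.eventually h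
  have h3 := deriv_deriv_nonpos_of_isLocalMax
    (hd1.continuous.continuousAt.comp hcont) hmax
  simp only [Function.comp_def] at h3
  rwa [h1, h2] at h3

/-! ### Partial derivatives and the barrier -/

section Calculus

variable {n : ℕ} {f g : (Fin n → ℝ) × ℝ → ℝ}

lemma contDiff_pdt (hf : ContDiff ℝ (⊤ : ℕ∞) f) : ContDiff ℝ (⊤ : ℕ∞) (pdt f) :=
  (hf.fderiv_right (m := (⊤ : ℕ∞)) (by simp)).clm_apply contDiff_const

lemma contDiff_pdx (i : Fin n) (hf : ContDiff ℝ (⊤ : ℕ∞) f) : ContDiff ℝ (⊤ : ℕ∞) (pdx i f) :=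
  (hf.fderiv_right (m := (⊤ : ℕ∞)) (by simp)).clm_apply contDiff_const

lemma pdx_pdt_comm (hf : ContDiff ℝ (⊤ : ℕ∞) f) (i : Fin n) (p : (Fin n → ℝ) × ℝ) :
    pdt (pdx i f) p = pdx i (pdt f) p := by
  have hd : DifferentiableAt ℝ (fderiv ℝ f) p :=
    (hf.fderiv_right (m := (⊤ : ℕ∞)) (by simp)).differentiable (by simp) p
  have hs : IsSymmSndFDerivAt ℝ f p := by
    apply hf.contDiffAt.isSymmSndFDerivAt
    simp only [minSmoothness_of_isRCLikeNormedField]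
    exact WithTop.coe_le_coe.2 le_top
  have key : ∀ u w : (Fin n → ℝ) × ℝ,
      fderiv ℝ (fun q => fderiv ℝ f q u) p w = fderiv ℝ (fderiv ℝ f) p w u := fun u w => by
    rw [fderiv_clm_apply hd (differentiableAt_const u)]
    simp
  change fderiv ℝ (fun q => fderiv ℝ f q _) p _ = fderiv ℝ (fun q => fderiv ℝ f q _) p _
  rw [key, key]
  exact hs _ _

/-- The Hessian of `f` evaluated on the vector `(x eᵢ, y)`. -/
lemma hessian_plane (hf : ContDiff ℝ (⊤ : ℕ∞) f) (i : Fin n) (p : (Fin n → ℝ) × ℝ) (x y : ℝ) :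
    fderiv ℝ (fun q => fderiv ℝ f q (Pi.single i x, y)) p (Pi.single i x, y)
      = x ^ 2 * pdx i (pdx i f) p + 2 * x * y * pdx i (pdt f) p + y ^ 2 * pdt (pdt f) p := by
  have hv : ((Pi.single i x, y) : (Fin n → ℝ) × ℝ)
      = x • ((Pi.single i 1, 0) : (Fin n → ℝ) × ℝ) + y • ((0, 1) : (Fin n → ℝ) × ℝ) := by
    ext j <;> simp [Pi.single_apply]
  have hlin : ∀ (h : (Fin n → ℝ) × ℝ → ℝ) q,
      fderiv ℝ h q (Pi.single i x, y) = x * pdx i h q + y * pdt h q := fun h q => by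
    rw [hv, map_add, map_smul, map_smul]; rfl
  have hx : DifferentiableAt ℝ (pdx i f) p := (contDiff_pdx i hf).differentiable (by simp) p
  have ht : DifferentiableAt ℝ (pdt f) p := (contDiff_pdt hf).differentiable (by simp) p
  have h1 : ∀ v, fderiv ℝ (fun q => x * pdx i f q + y * pdt f q) p v
      = x * fderiv ℝ (pdx i f) p v + y * fderiv ℝ (pdt f) p v := fun v => by
    rw [fderiv_fun_add (hx.const_mul x) (ht.const_mul y), fderiv_const_mul hx,
      fderiv_const_mul ht]
    simp
  simp_rw [hlin f]
  rw [h1, hlin, hlin, pdx_pdt_comm hf]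
  ring

/-- The barrier `δ (t² - t)`: it vanishes for `t = 0, 1`, and its only nonzero second derivative is
`∂ₜ² = 2δ`. -/
noncomputable def barrier (n : ℕ) (δ : ℝ) (p : (Fin n → ℝ) × ℝ) : ℝ := δ * (p.2 ^ 2 - p.2)

lemma contDiff_barrier (δ : ℝ) : ContDiff ℝ (⊤ : ℕ∞) (barrier n δ) := by
  unfold barrier; fun_prop

lemma fderiv_comp_snd {h : ℝ → ℝ} {h' : ℝ} {p : (Fin n → ℝ) × ℝ} (hh : HasDerivAt h h' p.2)
    (v : (Fin n → ℝ) × ℝ) : fderiv ℝ (fun q : (Fin n → ℝ) × ℝ => h q.2) p v = v.2 * h' := by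
  have := (hh.hasFDerivAt.comp p hasFDerivAt_snd).fderiv
  simp only [Function.comp_def] at this
  rw [this]
  simp

lemma fderiv_barrier (δ : ℝ) (p v : (Fin n → ℝ) × ℝ) :
    fderiv ℝ (barrier n δ) p v = v.2 * (δ * (2 * p.2 - 1)) := by
  refine fderiv_comp_snd (h := fun t => δ * (t ^ 2 - t)) ?_ v
  have := (((hasDerivAt_id p.2).pow 2).sub (hasDerivAt_id p.2)).const_mul δ
  simpa using this

lemma pdt_barrier (δ : ℝ) : pdt (barrier n δ) = fun p => δ * (2 * p.2 - 1) := by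
  funext p; simp [pdt, fderiv_barrier]

lemma pdx_barrier (i : Fin n) (δ : ℝ) : pdx i (barrier n δ) = fun _ => 0 := by
  funext p; simp [pdx, fderiv_barrier]

lemma fderiv_pdt_barrier (δ : ℝ) (p v : (Fin n → ℝ) × ℝ) :
    fderiv ℝ (pdt (barrier n δ)) p v = v.2 * (2 * δ) := by
  rw [pdt_barrier]
  refine fderiv_comp_snd (h := fun t => δ * (2 * t - 1)) ?_ v
  have := (((hasDerivAt_id p.2).const_mul 2).sub_const 1).const_mul δ
  simpa [mul_comm] using this

lemma pdt_sub_add {h : (Fin n → ℝ) × ℝ → ℝ} (hf : ContDiff ℝ (⊤ : ℕ∞) f)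
    (hg : ContDiff ℝ (⊤ : ℕ∞) g) (hh : ContDiff ℝ (⊤ : ℕ∞) h) :
    pdt (fun p => f p - g p + h p) = fun p => pdt f p - pdt g p + pdt h p := by
  funext p
  have df := hf.differentiable (by simp) p
  have dg := hg.differentiable (by simp) p
  have dh := hh.differentiable (by simp) p
  simp only [pdt]
  rw [fderiv_fun_add (df.fun_sub dg) dh, fderiv_fun_sub df dg]
  rfl

lemma pdx_sub_add (i : Fin n) {h : (Fin n → ℝ) × ℝ → ℝ} (hf : ContDiff ℝ (⊤ : ℕ∞) f)
    (hg : ContDiff ℝ (⊤ : ℕ∞) g) (hh : ContDiff ℝ (⊤ : ℕ∞) h) :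
    pdx i (fun p => f p - g p + h p) = fun p => pdx i f p - pdx i g p + pdx i h p := by
  funext p
  have df := hf.differentiable (by simp) p
  have dg := hg.differentiable (by simp) p
  have dh := hh.differentiable (by simp) p
  simp only [pdx]
  rw [fderiv_fun_add (df.fun_sub dg) dh, fderiv_fun_sub df dg]
  rfl

end Calculus

/-! ### The comparison principle -/

/-- A periodic function vanishing on `t = 0, 1` and positive somewhere on the slab `0 ≤ t ≤ 1` has,
at some point of the slab, a local maximum in all of `ℝⁿ × ℝ`: its maximum over the slab is positive,
so it is not attained on the boundary. -/
lemma exists_interior_isLocalMax {n : ℕ} {F : (Fin n → ℝ) × ℝ → ℝ} (hF : Continuous F)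
    (hper : ZnPeriodic F) (h0 : ∀ x, F (x, 0) = 0) (h1 : ∀ x, F (x, 1) = 0)
    {x₀ : Fin n → ℝ} {t₀ : ℝ} (ht₀ : t₀ ∈ Set.Icc (0 : ℝ) 1) (hpos : 0 < F (x₀, t₀)) :
    ∃ p : (Fin n → ℝ) × ℝ, p.2 ∈ Set.Icc (0 : ℝ) 1 ∧ IsLocalMax F p := by
  have hK : IsCompact (Set.Icc (0 : Fin n → ℝ) 1 ×ˢ Set.Icc (0 : ℝ) 1) :=
    isCompact_Icc.prod isCompact_Icc
  obtain ⟨p, hpK, hp⟩ := hK.exists_isMaxOn ⟨(0, 0), by simp⟩ hF.continuousOn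
  have hglob : ∀ x, ∀ t ∈ Set.Icc (0 : ℝ) 1, F (x, t) ≤ F p := by
    intro x t ht
    have hfr : (x + fun i => ((-⌊x i⌋ : ℤ) : ℝ)) = fun i => Int.fract (x i) := by
      funext i; simp [Int.fract, sub_eq_add_neg]
    rw [← hper (fun i => -⌊x i⌋) x t, hfr]
    exact hp ⟨⟨fun i => Int.fract_nonneg _, fun i => (Int.fract_lt_one _).le⟩, ht⟩
  have hFp : 0 < F p := hpos.trans_le (hglob x₀ t₀ ht₀)
  obtain ⟨x, t⟩ := p
  have ht : t ∈ Set.Icc (0 : ℝ) 1 := hpK.2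
  have ht0 : t ≠ 0 := by rintro rfl; exact hFp.ne' (h0 x)
  have ht1 : t ≠ 1 := by rintro rfl; exact hFp.ne' (h1 x)
  refine ⟨(x, t), ht, ?_⟩
  have hopen : ∀ᶠ q : (Fin n → ℝ) × ℝ in nhds (x, t), q.2 ∈ Set.Ioo (0 : ℝ) 1 :=
    continuous_snd.continuousAt.eventually
      (isOpen_Ioo.mem_nhds ⟨lt_of_le_of_ne ht.1 ht0.symm, lt_of_le_of_ne ht.2 ht1⟩)
  filter_upwards [hopen] with q hq using hglob q.1 q.2 (Set.Ioo_subset_Icc_self hq)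

/-- Of two solutions with the same boundary values, `Φ` lies below `Ψ` as soon as
`1 + Σᵢ ∂ᵢ²Φ > 0`. Exchanging the roles of the two gives uniqueness. -/
lemma phi_equation_le {n : ℕ} {ε : ℝ} (hε : 0 < ε) {Φ Ψ : (Fin n → ℝ) × ℝ → ℝ}
    (hΦ : ContDiff ℝ (⊤ : ℕ∞) Φ) (hΨ : ContDiff ℝ (⊤ : ℕ∞) Ψ)
    (hΦper : ZnPeriodic Φ) (hΨper : ZnPeriodic Ψ)
    (hΦpos : ∀ x, ∀ t ∈ Set.Icc (0 : ℝ) 1, 0 < 1 + ∑ i : Fin n, pdx i (pdx i Φ) (x, t))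
    (hΦeq : ∀ x, ∀ t ∈ Set.Icc (0 : ℝ) 1, qOp Φ (x, t) = ε)
    (hΨeq : ∀ x, ∀ t ∈ Set.Icc (0 : ℝ) 1, qOp Ψ (x, t) = ε)
    (h0 : ∀ x, Φ (x, 0) = Ψ (x, 0)) (h1 : ∀ x, Φ (x, 1) = Ψ (x, 1)) :
    ∀ x, ∀ t ∈ Set.Icc (0 : ℝ) 1, Φ (x, t) ≤ Ψ (x, t) := by
  intro x₀ t₀ ht₀
  by_contra! hlt
  -- `t² - t ≥ -1` on `[0,1]`, so `δ` below the gap leaves `F` positive at `(x₀, t₀)`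
  obtain ⟨δ, hδ, hδ'⟩ : ∃ δ : ℝ, 0 < δ ∧ δ < Φ (x₀, t₀) - Ψ (x₀, t₀) :=
    exists_between (sub_pos.2 hlt)
  have hb := contDiff_barrier (n := n) δ
  set F : (Fin n → ℝ) × ℝ → ℝ := fun p => Φ p - Ψ p + barrier n δ p with hFdef
  have hF : ContDiff ℝ (⊤ : ℕ∞) F := (hΦ.sub hΨ).add hb
  have hFper : ZnPeriodic F := fun k x t => by
    simp only [hFdef, barrier, hΦper k x t, hΨper k x t]
  have hF0 : ∀ x, F (x, 0) = 0 := fun x => by simp [hFdef, barrier, h0]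
  have hF1 : ∀ x, F (x, 1) = 0 := fun x => by simp [hFdef, barrier, h1]
  have hFpos : 0 < F (x₀, t₀) := by
    simp only [hFdef, barrier]
    nlinarith [mul_nonneg hδ.le (sq_nonneg t₀), mul_nonneg hδ.le (sub_nonneg.2 ht₀.2)]
  obtain ⟨⟨x, t⟩, ht, hmax⟩ := exists_interior_isLocalMax hF.continuous hFper hF0 hF1 ht₀ hFpos
  set p : (Fin n → ℝ) × ℝ := (x, t)
  have htt : pdt (pdt F) p = pdt (pdt Φ) p - pdt (pdt Ψ) p + 2 * δ := by
    rw [hFdef, pdt_sub_add hΦ hΨ hb,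
      pdt_sub_add (contDiff_pdt hΦ) (contDiff_pdt hΨ) (contDiff_pdt hb)]
    have : pdt (pdt (barrier n δ)) p = 2 * δ := by
      rw [pdt, fderiv_pdt_barrier]; simp
    simp only [this]
  have hxt : ∀ i, pdx i (pdt F) p = pdx i (pdt Φ) p - pdx i (pdt Ψ) p := fun i => by
    rw [hFdef, pdt_sub_add hΦ hΨ hb,
      pdx_sub_add i (contDiff_pdt hΦ) (contDiff_pdt hΨ) (contDiff_pdt hb)]
    have : pdx i (pdt (barrier n δ)) p = 0 := by
      rw [pdx, fderiv_pdt_barrier]; simp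
    simp only [this, add_zero]
  have hxx : ∀ i, pdx i (pdx i F) p = pdx i (pdx i Φ) p - pdx i (pdx i Ψ) p := fun i => by
    rw [hFdef, pdx_sub_add i hΦ hΨ hb,
      pdx_sub_add i (contDiff_pdx i hΦ) (contDiff_pdx i hΨ) (contDiff_pdx i hb)]
    have : pdx i (pdx i (barrier n δ)) p = 0 := by
      rw [pdx_barrier]; simp [pdx]
    simp only [this, add_zero]
  have hquad : ∀ i, ∀ x y : ℝ, x ^ 2 * pdx i (pdx i F) p + 2 * x * y * pdx i (pdt F) p
      + y ^ 2 * pdt (pdt F) p ≤ 0 := fun i x y =>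
    (hessian_plane hF i p x y).symm.trans_le (hmax.fderiv_fderiv_nonpos hF _)
  have hpdtt : pdt (pdt F) p ≤ 0 := hmax.fderiv_fderiv_nonpos hF (0, 1)
  have hpdxx : ∀ i, pdx i (pdx i F) p ≤ 0 := fun i =>
    hmax.fderiv_fderiv_nonpos hF (Pi.single i 1, 0)
  have hdisc : ∀ i, pdx i (pdt F) p ^ 2 ≤ -pdt (pdt F) p * -pdx i (pdx i F) p := fun i => by
    have h := discrim_le_zero (a := -pdx i (pdx i F) p) (b := -2 * pdx i (pdt F) p)
      (c := -pdt (pdt F) p) fun s => by nlinarith [hquad i s 1]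
    rw [discrim] at h
    nlinarith
  have hlor := lorentz_lt (A := pdt (pdt Φ) p) (B := 1 + ∑ i, pdx i (pdx i Φ) p)
    (α := -pdt (pdt F) p) (β := ∑ i, -pdx i (pdx i F) p) (d := 2 * δ)
    (c := fun i => pdx i (pdt Φ) p) (k := fun i => -pdx i (pdt F) p)
    (hΦpos x t ht) (hε.trans_eq (hΦeq x t ht).symm) (by linarith)
    (Finset.sum_nonneg fun i _ => by linarith [hpdxx i]) (by linarith)
    (by
      rw [Finset.mul_sum]
      exact Finset.sum_le_sum fun i _ => by rw [neg_sq]; exact hdisc i)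
  have e1 : pdt (pdt Φ) p + -pdt (pdt F) p + 2 * δ = pdt (pdt Ψ) p := by rw [htt]; ring
  have e2 : 1 + ∑ i, pdx i (pdx i Φ) p + ∑ i, -pdx i (pdx i F) p
      = 1 + ∑ i, pdx i (pdx i Ψ) p := by
    rw [add_assoc, ← Finset.sum_add_distrib]
    congr 1
    exact Finset.sum_congr rfl fun i _ => by rw [hxx i]; ring
  have e3 : ∀ i, pdx i (pdt Φ) p + -pdx i (pdt F) p = pdx i (pdt Ψ) p := fun i => by
    rw [hxt i]; ring
  simp only [e1, e2, e3] at hlor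
  exact absurd ((hΦeq x t ht).trans (hΨeq x t ht).symm) hlor.ne


/-- Uniqueness of the solution of the Dirichlet problem for the Φ-equation `q(Φ) = ε`
on the flat torus `X = ℝⁿ/ℤⁿ`: two smooth `ℤⁿ`-periodic solutions on `ℝⁿ × [0,1]` with
`1 − Δ_X Φ > 0`, the same boundary values `φ₀, φ₁`, coincide on `ℝⁿ × [0,1]`. -/
theorem phi_equation_unique {n : ℕ} (hn : 1 ≤ n) (ε : ℝ) (hε : 0 < ε)
    (φ₀ φ₁ : (Fin n → ℝ) → ℝ)
    (hφ₀ : ContDiff ℝ (⊤ : ℕ∞) φ₀) (hφ₁ : ContDiff ℝ (⊤ : ℕ∞) φ₁)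
    (hφ₀per : ∀ (k : Fin n → ℤ) (x : Fin n → ℝ), φ₀ (x + fun i => (k i : ℝ)) = φ₀ x)
    (hφ₁per : ∀ (k : Fin n → ℤ) (x : Fin n → ℝ), φ₁ (x + fun i => (k i : ℝ)) = φ₁ x)
    (Φ Ψ : (Fin n → ℝ) × ℝ → ℝ)
    (hΦ : ContDiff ℝ (⊤ : ℕ∞) Φ) (hΨ : ContDiff ℝ (⊤ : ℕ∞) Ψ)
    (hΦper : ZnPeriodic Φ) (hΨper : ZnPeriodic Ψ)
    (hΦpos : ∀ x, ∀ t ∈ Set.Icc (0 : ℝ) 1, 0 < 1 + ∑ i : Fin n, pdx i (pdx i Φ) (x, t))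
    (hΨpos : ∀ x, ∀ t ∈ Set.Icc (0 : ℝ) 1, 0 < 1 + ∑ i : Fin n, pdx i (pdx i Ψ) (x, t))
    (hΦeq : ∀ x, ∀ t ∈ Set.Icc (0 : ℝ) 1, qOp Φ (x, t) = ε)
    (hΨeq : ∀ x, ∀ t ∈ Set.Icc (0 : ℝ) 1, qOp Ψ (x, t) = ε)
    (hΦ0 : ∀ x, Φ (x, 0) = φ₀ x) (hΦ1 : ∀ x, Φ (x, 1) = φ₁ x)
    (hΨ0 : ∀ x, Ψ (x, 0) = φ₀ x) (hΨ1 : ∀ x, Ψ (x, 1) = φ₁ x) :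
    ∀ x, ∀ t ∈ Set.Icc (0 : ℝ) 1, Φ (x, t) = Ψ (x, t) := by
  intro x t ht
  have h0 : ∀ x, Φ (x, 0) = Ψ (x, 0) := fun x => (hΦ0 x).trans (hΨ0 x).symm
  have h1 : ∀ x, Φ (x, 1) = Ψ (x, 1) := fun x => (hΦ1 x).trans (hΨ1 x).symm
  exact le_antisymm
    (phi_equation_le hε hΦ hΨ hΦper hΨper hΦpos hΦeq hΨeq h0 h1 x t ht)
    (phi_equation_le hε hΨ hΦ hΨper hΦper hΨpos hΨeq hΦeq (fun x => (h0 x).symm)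
      (fun x => (h1 x).symm) x t ht)
end

section
/- Fix n ≥ 1 and ε ≥ 0. Let Φ, ψ : ℝⁿ × [0,1] → ℝ be smooth functions, ℤⁿ-periodic in x, with ψ(x,0) = ψ(x,1) = 0 for all x. Define E(G) = ∫₀¹ ∫_{[0,1]ⁿ} [ ½ (∂ₜG)²·(1 + Σᵢ ∂ᵢ²G) + εG ] dx dt for smooth G periodic in x. Then the function s ↦ E(Φ + sψ) is differentiable and d/ds E(Φ + sψ) = ∫₀¹ ∫_{[0,1]ⁿ} (ε − q(Φ + sψ))·ψ dx dt for every s ∈ ℝ. -/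
/-!
Along the line `h ↦ G + hψ` the energy is a cubic polynomial in `h` (`energy_expand`), so its
derivative at `h = 0` is the integral of the linear coefficient
`∂ₜG ∂ₜψ (1 + ΔG) + ½ (∂ₜG)² Δψ + εψ`. Since
`Δ(½ (∂ₜG)²) = ∂ₜG Δ∂ₜG + Σᵢ (∂ᵢ∂ₜG)²` and mixed partials commute, this coefficient minus
`(ε − q(G))ψ` equals the divergence
`∂ₜ(ψ ∂ₜG (1 + ΔG)) + Σᵢ ∂ᵢ(½ (∂ₜG)² ∂ᵢψ − ψ ∂ₜG ∂ᵢ∂ₜG)`.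
The `t`-derivative integrates to zero because `ψ` vanishes at `t = 0, 1`
(`dblInt_dt_eq_zero`), and each `xᵢ`-derivative because its argument is periodic
(`dblInt_dx_eq_zero`). The case of general `s` is that of `G = Φ + sψ`.
-/

open MeasureTheory

/-- The energy functional
`E(G) = ∫₀¹ ∫_{[0,1]ⁿ} [ ½ (∂ₜG)²·(1 + Σᵢ ∂ᵢ²G) + εG ] dx dt`. -/
noncomputable def energy {n : ℕ} (ε : ℝ) (G : (Fin n → ℝ) × ℝ → ℝ) : ℝ :=
  ∫ t in Set.Icc (0 : ℝ) 1, ∫ x in Set.Icc (0 : Fin n → ℝ) 1,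
    ((1 / 2) * (pdt G (x, t)) ^ 2 * (1 + ∑ i : Fin n, pdx i (pdx i G) (x, t))
      + ε * G (x, t))

/-- The directional derivative `∂ᵥf`; `pdt` and `pdx i` are the cases of the coordinate vectors. -/
noncomputable def dirD {n : ℕ} (v : (Fin n → ℝ) × ℝ) (f : (Fin n → ℝ) × ℝ → ℝ)
    (p : (Fin n → ℝ) × ℝ) : ℝ := fderiv ℝ f p v

/-- The double integral `∫₀¹ ∫_{[0,1]ⁿ} f dx dt`. -/
noncomputable def dblInt {n : ℕ} (f : (Fin n → ℝ) × ℝ → ℝ) : ℝ :=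
  ∫ t in Set.Icc (0 : ℝ) 1, ∫ x in Set.Icc (0 : Fin n → ℝ) 1, f (x, t)

/-! ### Directional derivatives of smooth functions -/

section Calculus

variable {n : ℕ} {f g : (Fin n → ℝ) × ℝ → ℝ}

lemma pdt_eq_dirD : pdt f = dirD (0, 1) f := rfl

lemma pdx_eq_dirD (i : Fin n) : pdx i f = dirD (Pi.single i 1, 0) f := rfl

lemma ContDiff.dirD_smooth (hf : ContDiff ℝ (⊤ : ℕ∞) f) (v : (Fin n → ℝ) × ℝ) :
    ContDiff ℝ (⊤ : ℕ∞) (dirD v f) :=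
  (hf.fderiv_right (m := (⊤ : ℕ∞)) (by simp)).clm_apply contDiff_const

lemma ContDiff.diffAt (hf : ContDiff ℝ (⊤ : ℕ∞) f) (p : (Fin n → ℝ) × ℝ) :
    DifferentiableAt ℝ f p :=
  (hf.differentiable (by simp)) p

lemma dirD_add_mul (hf : ContDiff ℝ (⊤ : ℕ∞) f) (hg : ContDiff ℝ (⊤ : ℕ∞) g)
    (v : (Fin n → ℝ) × ℝ) (s : ℝ) :
    dirD v (fun p => f p + s * g p) = fun p => dirD v f p + s * dirD v g p := by
  funext p
  simp only [dirD]
  rw [fderiv_fun_add (hf.diffAt p) ((hg.diffAt p).const_mul s), fderiv_const_mul (hg.diffAt p)]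
  simp

lemma dirD_mul (hf : ContDiff ℝ (⊤ : ℕ∞) f) (hg : ContDiff ℝ (⊤ : ℕ∞) g)
    (v p : (Fin n → ℝ) × ℝ) :
    dirD v (fun p => f p * g p) p = f p * dirD v g p + g p * dirD v f p := by
  simp only [dirD]
  rw [fderiv_fun_mul (hf.diffAt p) (hg.diffAt p)]
  simp

lemma dirD_sum {ι : Type*} (s : Finset ι) {F : ι → (Fin n → ℝ) × ℝ → ℝ}
    (hF : ∀ i, ContDiff ℝ (⊤ : ℕ∞) (F i)) (v p : (Fin n → ℝ) × ℝ) :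
    dirD v (fun p => 1 + ∑ i ∈ s, F i p) p = ∑ i ∈ s, dirD v (F i) p := by
  simp only [dirD]
  rw [fderiv_const_add, fderiv_fun_sum (fun i _ => (hF i).diffAt p)]
  simp

lemma dirD_comm (hf : ContDiff ℝ (⊤ : ℕ∞) f) (v w : (Fin n → ℝ) × ℝ) :
    dirD v (dirD w f) = dirD w (dirD v f) := by
  have hd : Differentiable ℝ (fderiv ℝ f) :=
    (hf.fderiv_right (m := (⊤ : ℕ∞)) (by simp)).differentiable (by simp)
  have key : ∀ (a b p : (Fin n → ℝ) × ℝ),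
      dirD a (dirD b f) p = fderiv ℝ (fderiv ℝ f) p a b := by
    intro a b p
    have h : HasFDerivAt (dirD b f)
        ((ContinuousLinearMap.apply ℝ ℝ b).comp (fderiv ℝ (fderiv ℝ f) p)) p :=
      (ContinuousLinearMap.apply ℝ ℝ b).hasFDerivAt.comp p (hd p).hasFDerivAt
    simp only [dirD] at h ⊢
    rw [h.fderiv]
    simp
  funext p
  rw [key, key]
  exact (hf.contDiffAt.isSymmSndFDerivAt (by
    simpa using WithTop.coe_le_coe.2 (le_top : (2 : ℕ∞) ≤ ⊤))) v w

lemma ZnPeriodic.dirD (hf : ZnPeriodic f) (v : (Fin n → ℝ) × ℝ) : ZnPeriodic (dirD v f) := by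
  intro k x t
  have h : (fun p : (Fin n → ℝ) × ℝ => f (p + (fun i => (k i : ℝ), 0))) = f := by
    funext ⟨y, r⟩
    simpa using hf k y r
  have h2 := fderiv_comp_add_right (𝕜 := ℝ) (f := f) (x := (x, t)) (fun i => (k i : ℝ), (0 : ℝ))
  rw [h] at h2
  simp only [_root_.dirD]
  rw [h2]
  simp

end Calculus

/-! ### Integrals over the unit cube -/

section Integrals

variable {n : ℕ} {f g : (Fin n → ℝ) × ℝ → ℝ}

lemma integrable_cube (hf : Continuous f) :
    Integrable f ((volume.restrict (Set.Icc (0 : Fin n → ℝ) 1)).prod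
      (volume.restrict (Set.Icc (0 : ℝ) 1))) := by
  rw [Measure.prod_restrict]
  exact hf.continuousOn.integrableOn_compact (isCompact_Icc.prod isCompact_Icc)

lemma dblInt_eq (hf : Continuous f) :
    dblInt f = ∫ p, f p ∂((volume.restrict (Set.Icc (0 : Fin n → ℝ) 1)).prod
      (volume.restrict (Set.Icc (0 : ℝ) 1))) :=
  (integral_prod_symm f (integrable_cube hf)).symm

lemma dblInt_add (hf : Continuous f) (hg : Continuous g) :
    dblInt (fun p => f p + g p) = dblInt f + dblInt g := by
  rw [dblInt_eq hf, dblInt_eq hg, dblInt_eq (f := fun p => f p + g p) (hf.add hg)]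
  exact integral_add (integrable_cube hf) (integrable_cube hg)

lemma dblInt_const_mul (c : ℝ) : dblInt (fun p => c * f p) = c * dblInt f := by
  simp only [dblInt, integral_const_mul]

lemma dblInt_sum {ι : Type*} (s : Finset ι) {F : ι → (Fin n → ℝ) × ℝ → ℝ}
    (hF : ∀ i, Continuous (F i)) :
    dblInt (fun p => ∑ i ∈ s, F i p) = ∑ i ∈ s, dblInt (F i) := by
  rw [dblInt_eq (continuous_finsetSum _ fun i _ => hF i)]
  simp only [fun i => dblInt_eq (hF i)]
  exact integral_finsetSum _ fun i _ => integrable_cube (hF i)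

/-- The integral of a `t`-derivative vanishes when the function is zero at `t = 0` and `t = 1`. -/
lemma dblInt_dt_eq_zero (hf : ContDiff ℝ (⊤ : ℕ∞) f) (h0 : ∀ x, f (x, 0) = 0)
    (h1 : ∀ x, f (x, 1) = 0) : dblInt (dirD (0, 1) f) = 0 := by
  have hc := (hf.dirD_smooth (0, 1)).continuous
  rw [dblInt_eq hc, integral_prod _ (integrable_cube hc)]
  refine integral_eq_zero_of_ae (Filter.Eventually.of_forall fun x => ?_)
  have hd : ∀ t ∈ Set.uIcc (0 : ℝ) 1,
      HasDerivAt (fun t => f (x, t)) (dirD (0, 1) f (x, t)) t := fun t _ =>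
    (hf.diffAt (x, t)).hasFDerivAt.comp_hasDerivAt t
      ((hasDerivAt_const t x).prodMk (hasDerivAt_id t))
  have hi : IntervalIntegrable (fun t => dirD (0, 1) f (x, t)) volume 0 1 :=
    (hc.comp (by fun_prop : Continuous fun t : ℝ => (x, t))).intervalIntegrable _ _
  have := intervalIntegral.integral_eq_sub_of_hasDerivAt hd hi
  rw [intervalIntegral.integral_of_le zero_le_one, ← integral_Icc_eq_integral_Ioc] at this
  simpa [h0, h1] using this

/-- The integral of an `xᵢ`-derivative of a periodic function vanishes: opposite faces of the
cube cancel in the divergence theorem. -/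
lemma dblInt_dx_eq_zero (hf : ContDiff ℝ (⊤ : ℕ∞) f) (hper : ZnPeriodic f) (i : Fin n) :
    dblInt (dirD (Pi.single i 1, 0) f) = 0 := by
  obtain _ | m := n
  · exact i.elim0
  have hc := (hf.dirD_smooth (Pi.single i 1, 0)).continuous
  refine integral_eq_zero_of_ae (Filter.Eventually.of_forall fun t => ?_)
  have hu : ∀ x : Fin (m + 1) → ℝ, HasFDerivAt (fun x => f (x, t))
      ((fderiv ℝ f (x, t)).comp (ContinuousLinearMap.inl ℝ _ _)) x := fun x => by
    have h := (hf.diffAt (x, t)).hasFDerivAt.comp x (hasFDerivAt_prodMk_left (𝕜 := ℝ) x t)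
    exact h
  have hcu : Continuous fun x : Fin (m + 1) → ℝ => f (x, t) :=
    hf.continuous.comp (by fun_prop)
  -- The divergence theorem for the vector field `x ↦ f (x, t) eᵢ`.
  have key := integral_divergence_of_hasFDerivAt_off_countable
    (E := ℝ) (n := m) (0 : Fin (m + 1) → ℝ) 1 (fun _ => zero_le_one)
    (fun x => Pi.single i (f (x, t)))
    (fun x => ContinuousLinearMap.pi
      (Pi.single i ((fderiv ℝ f (x, t)).comp (ContinuousLinearMap.inl ℝ _ _))))
    ∅ Set.countable_empty ?_ ?_ ?_
  · have hdiv : ∀ x : Fin (m + 1) → ℝ, ∑ j, (ContinuousLinearMap.pi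
        (Pi.single (M := fun _ => (Fin (m + 1) → ℝ) →L[ℝ] ℝ) i
          ((fderiv ℝ f (x, t)).comp (ContinuousLinearMap.inl ℝ _ _)))) (Pi.single j 1) j
        = dirD (Pi.single i 1, 0) f (x, t) := by
      intro x
      rw [Finset.sum_eq_single i]
      · simp [dirD]
      · intro j _ hj
        simp [Pi.single_eq_of_ne hj]
      · simp
    simp only [hdiv] at key
    refine key.trans (Finset.sum_eq_zero fun j _ => ?_)
    rw [sub_eq_zero]
    refine integral_congr_ae (Filter.Eventually.of_forall fun y => ?_)
    rcases eq_or_ne j i with rfl | hj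
    · simp only [Pi.single_eq_same, Pi.one_apply, Pi.zero_apply]
      rw [← hper (Pi.single j 1) (j.insertNth (0 : ℝ) y) t]
      congr 2
      funext l
      refine Fin.succAboveCases j ?_ (fun l => ?_) l
      · simp
      · simp
    · simp [Pi.single_eq_of_ne hj]
  · refine Continuous.continuousOn ?_
    refine continuous_pi fun j => ?_
    rcases eq_or_ne j i with rfl | hj
    · simpa using hcu
    · simpa [Pi.single_eq_of_ne hj] using continuous_const
  · intro x _
    rw [hasFDerivAt_pi]
    intro j
    rcases eq_or_ne j i with rfl | hj
    · simpa using hu x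
    · simpa [Pi.single_eq_of_ne hj] using hasFDerivAt_const (0 : ℝ) x
  · refine (Continuous.continuousOn ?_).integrableOn_compact isCompact_Icc
    have h2 : Continuous fun x : Fin (m + 1) → ℝ => dirD (Pi.single i 1, 0) f (x, t) :=
      hc.comp (by fun_prop)
    convert h2 using 2 with x
    rw [Finset.sum_eq_single i]
    · simp [dirD]
    · intro j _ hj
      simp [Pi.single_eq_of_ne hj]
    · simp

end Integrals

/-! ### Expansion of the energy and integration by parts -/

section Variation

variable {n : ℕ} {G ψ : (Fin n → ℝ) × ℝ → ℝ}

/-- The integrand of the linear term of `h ↦ E(G + hψ)`, before integration by parts. -/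
noncomputable def linTerm (ε : ℝ) (G ψ : (Fin n → ℝ) × ℝ → ℝ) (p : (Fin n → ℝ) × ℝ) : ℝ :=
  pdt G p * pdt ψ p * (1 + ∑ i : Fin n, pdx i (pdx i G) p)
    + (1 / 2) * pdt G p ^ 2 * (∑ i : Fin n, pdx i (pdx i ψ) p) + ε * ψ p

lemma ContDiff.pdt_smooth (hG : ContDiff ℝ (⊤ : ℕ∞) G) : ContDiff ℝ (⊤ : ℕ∞) (pdt G) :=
  hG.dirD_smooth _

lemma ContDiff.pdx_smooth (hG : ContDiff ℝ (⊤ : ℕ∞) G) (i : Fin n) :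
    ContDiff ℝ (⊤ : ℕ∞) (pdx i G) :=
  hG.dirD_smooth _

lemma ContDiff.lap_smooth (hG : ContDiff ℝ (⊤ : ℕ∞) G) :
    ContDiff ℝ (⊤ : ℕ∞) (fun p => ∑ i : Fin n, pdx i (pdx i G) p) :=
  ContDiff.sum fun i _ => (hG.pdx_smooth i).pdx_smooth i

lemma energy_eq_dblInt (ε : ℝ) : energy ε G = dblInt (fun p =>
    (1 / 2) * (pdt G p) ^ 2 * (1 + ∑ i : Fin n, pdx i (pdx i G) p) + ε * G p) := rfl

/-- The energy is a cubic polynomial along the line `h ↦ G + hψ`. -/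
lemma energy_expand (ε : ℝ) (hG : ContDiff ℝ (⊤ : ℕ∞) G) (hψ : ContDiff ℝ (⊤ : ℕ∞) ψ) :
    ∃ c d : ℝ, ∀ h : ℝ, energy ε (fun p => G p + h * ψ p)
      = energy ε G + h * dblInt (linTerm ε G ψ) + h ^ 2 * c + h ^ 3 * d := by
  have c1 := hG.pdt_smooth.continuous
  have c2 := hψ.pdt_smooth.continuous
  have c3 := hG.lap_smooth.continuous
  have c4 := hψ.lap_smooth.continuous
  have c5 := hG.continuous
  have c6 := hψ.continuous
  let e0 : (Fin n → ℝ) × ℝ → ℝ := fun p =>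
    (1 / 2) * (pdt G p) ^ 2 * (1 + ∑ i : Fin n, pdx i (pdx i G) p) + ε * G p
  let e2 : (Fin n → ℝ) × ℝ → ℝ := fun p =>
    (1 / 2) * (pdt ψ p) ^ 2 * (1 + ∑ i : Fin n, pdx i (pdx i G) p)
      + pdt G p * pdt ψ p * ∑ i : Fin n, pdx i (pdx i ψ) p
  let e3 : (Fin n → ℝ) × ℝ → ℝ := fun p =>
    (1 / 2) * (pdt ψ p) ^ 2 * ∑ i : Fin n, pdx i (pdx i ψ) p
  have k0 : Continuous e0 := by fun_prop
  have k1 : Continuous (linTerm ε G ψ) := by unfold linTerm; fun_prop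
  have k2 : Continuous e2 := by fun_prop
  have k3 : Continuous e3 := by fun_prop
  refine ⟨dblInt e2, dblInt e3, fun h => ?_⟩
  have hE : energy ε G = dblInt e0 := energy_eq_dblInt ε
  rw [hE, ← dblInt_const_mul, ← dblInt_const_mul, ← dblInt_const_mul,
    ← dblInt_add k0 (by fun_prop), ← dblInt_add (by fun_prop) (by fun_prop),
    ← dblInt_add (by fun_prop) (by fun_prop)]
  rw [energy_eq_dblInt]
  congr 1
  funext p
  have h1 : pdt (fun p => G p + h * ψ p) = fun p => pdt G p + h * pdt ψ p :=
    dirD_add_mul hG hψ _ h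
  have h2 : ∀ i, pdx i (pdx i (fun p => G p + h * ψ p))
      = fun p => pdx i (pdx i G) p + h * pdx i (pdx i ψ) p := fun i => by
    have : pdx i (fun p => G p + h * ψ p) = fun p => pdx i G p + h * pdx i ψ p :=
      dirD_add_mul hG hψ _ h
    rw [this]
    exact dirD_add_mul (hG.pdx_smooth i) (hψ.pdx_smooth i) _ h
  simp only [h1, h2, Finset.sum_add_distrib, ← Finset.mul_sum, linTerm, e0, e2, e3]
  ring

/-- Integration by parts, where `(ε − q(G))ψ` is the integrand on the right. The two integrands
differ by the divergence
`∂ₜ(ψ ∂ₜG (1 + ΔG)) + Σᵢ ∂ᵢ(½ (∂ₜG)² ∂ᵢψ − ψ ∂ₜG ∂ᵢ∂ₜG)`. -/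
lemma dblInt_linTerm (ε : ℝ) (hG : ContDiff ℝ (⊤ : ℕ∞) G) (hψ : ContDiff ℝ (⊤ : ℕ∞) ψ)
    (hGper : ZnPeriodic G) (hψper : ZnPeriodic ψ)
    (hψ0 : ∀ x, ψ (x, 0) = 0) (hψ1 : ∀ x, ψ (x, 1) = 0) :
    dblInt (linTerm ε G ψ) = dblInt (fun p => (ε - qOp G p) * ψ p) := by
  let W : (Fin n → ℝ) × ℝ → ℝ := fun p =>
    ψ p * (pdt G p * (1 + ∑ i : Fin n, pdx i (pdx i G) p))
  let V : Fin n → (Fin n → ℝ) × ℝ → ℝ := fun i p => ψ p * (pdt G p * pdx i (pdt G) p)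
  have sT := hG.pdt_smooth
  have sL : ContDiff ℝ (⊤ : ℕ∞) (fun p => 1 + ∑ i : Fin n, pdx i (pdx i G) p) :=
    contDiff_const.add hG.lap_smooth
  have sW : ContDiff ℝ (⊤ : ℕ∞) W := hψ.mul (sT.mul sL)
  have sU' : ∀ i, ContDiff ℝ (⊤ : ℕ∞) (fun p => pdt G p * (pdt G p * pdx i ψ p)) := fun i =>
    sT.mul (sT.mul (hψ.pdx_smooth i))
  have sV : ∀ i, ContDiff ℝ (⊤ : ℕ∞) (V i) := fun i => hψ.mul (sT.mul (sT.pdx_smooth i))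
  let X : Fin n → (Fin n → ℝ) × ℝ → ℝ := fun i p =>
    V i p + (-(1 / 2)) * (pdt G p * (pdt G p * pdx i ψ p))
  have sX : ∀ i, ContDiff ℝ (⊤ : ℕ∞) (X i) := fun i =>
    (sV i).add (contDiff_const.mul (sU' i))
  have pX : ∀ i, ZnPeriodic (X i) := fun i k x t => by
    have a1 := hψper k x t
    have a2 : pdt G _ = _ := hGper.dirD (0, 1) k x t
    have a3 : pdx i ψ _ = _ := hψper.dirD (Pi.single i 1, 0) k x t
    have a4 : pdx i (pdt G) _ = _ := (hGper.dirD (0, 1)).dirD (Pi.single i 1, 0) k x t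
    simp only [X, V, a1, a2, a3, a4]
    rfl
  have zW : dblInt (dirD (0, 1) W) = 0 :=
    dblInt_dt_eq_zero sW (by simp [W, hψ0]) (by simp [W, hψ1])
  have zX : ∀ i, dblInt (dirD (Pi.single i 1, 0) (X i)) = 0 := fun i =>
    dblInt_dx_eq_zero (sX i) (pX i) i
  have cW := (sW.dirD_smooth (0, 1)).continuous
  have cX : ∀ i, Continuous (dirD (Pi.single i 1, 0) (X i)) := fun i =>
    ((sX i).dirD_smooth _).continuous
  have c1 := sT.continuous
  have c2 := hψ.pdt_smooth.continuous
  have c3 := hG.lap_smooth.continuous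
  have c4 := hψ.lap_smooth.continuous
  have c6 := hψ.continuous
  have k1 : Continuous (linTerm ε G ψ) := by unfold linTerm; fun_prop
  have zS : dblInt (fun p => ∑ i, dirD (Pi.single i 1, 0) (X i) p) = 0 := by
    rw [dblInt_sum _ cX]
    simp [zX]
  have key : dblInt (linTerm ε G ψ) = dblInt (fun p => linTerm ε G ψ p
      + ((-1) * dirD (0, 1) W p + ∑ i, dirD (Pi.single i 1, 0) (X i) p)) := by
    rw [dblInt_add k1 (by fun_prop), dblInt_add (by fun_prop) (by fun_prop), dblInt_const_mul,
      zW, zS]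
    simp
  rw [key]
  congr 1
  funext p
  have dW : dirD (0, 1) W p = ψ p * (pdt G p * (∑ i : Fin n, pdx i (pdx i (pdt G)) p)
      + (1 + ∑ i : Fin n, pdx i (pdx i G) p) * pdt (pdt G) p)
      + pdt G p * (1 + ∑ i : Fin n, pdx i (pdx i G) p) * pdt ψ p := by
    have hL : dirD (0, 1) (fun p => 1 + ∑ i : Fin n, pdx i (pdx i G) p) p
        = ∑ i : Fin n, pdx i (pdx i (pdt G)) p := by
      rw [dirD_sum _ fun i => (hG.pdx_smooth i).pdx_smooth i]
      refine Finset.sum_congr rfl fun i _ => ?_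
      simp only [pdt_eq_dirD, pdx_eq_dirD]
      rw [dirD_comm (hG.dirD_smooth _), dirD_comm hG (0, 1)]
    rw [dirD_mul hψ (sT.mul sL), dirD_mul sT sL, hL]
    rfl
  have dX : ∀ i, dirD (Pi.single i 1, 0) (X i) p
      = ψ p * pdt G p * pdx i (pdx i (pdt G)) p + ψ p * pdx i (pdt G) p ^ 2
        - (1 / 2) * pdt G p ^ 2 * pdx i (pdx i ψ) p := fun i => by
    have hV := dirD_mul hψ (sT.mul (sT.pdx_smooth i)) (Pi.single i 1, 0) p
    rw [dirD_add_mul (sV i) (sU' i)]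
    simp only [V]
    rw [hV,
      dirD_mul sT (sT.pdx_smooth i), dirD_mul sT (sT.mul (hψ.pdx_smooth i)),
      dirD_mul sT (hψ.pdx_smooth i)]
    simp only [← pdx_eq_dirD]
    ring
  simp only [dW, dX, Finset.sum_add_distrib, Finset.sum_sub_distrib, ← Finset.mul_sum, linTerm,
    qOp]
  ring

end Variation

/-- The first variation of the energy functional along a variation `ψ` vanishing at
`t = 0, 1`: `d/ds E(Φ + sψ) = ∫₀¹ ∫_{[0,1]ⁿ} (ε − q(Φ + sψ))·ψ dx dt`. -/
theorem energy_first_variation {n : ℕ} (hn : 1 ≤ n) (ε : ℝ) (hε : 0 ≤ ε)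
    (Φ ψ : (Fin n → ℝ) × ℝ → ℝ)
    (hΦ : ContDiff ℝ (⊤ : ℕ∞) Φ) (hψ : ContDiff ℝ (⊤ : ℕ∞) ψ)
    (hΦper : ZnPeriodic Φ) (hψper : ZnPeriodic ψ)
    (hψ0 : ∀ x, ψ (x, 0) = 0) (hψ1 : ∀ x, ψ (x, 1) = 0) :
    ∀ s : ℝ,
      HasDerivAt (fun s : ℝ => energy ε (fun p => Φ p + s * ψ p))
        (∫ t in Set.Icc (0 : ℝ) 1, ∫ x in Set.Icc (0 : Fin n → ℝ) 1,
          (ε - qOp (fun p => Φ p + s * ψ p) (x, t)) * ψ (x, t)) s := by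
  intro s
  have hG : ContDiff ℝ (⊤ : ℕ∞) (fun p => Φ p + s * ψ p) := hΦ.add (contDiff_const.mul hψ)
  have hGper : ZnPeriodic (fun p => Φ p + s * ψ p) := fun k x t => by
    simp only [hΦper k x t, hψper k x t]
  obtain ⟨c, d, hcd⟩ := energy_expand ε hG hψ
  rw [dblInt_linTerm ε hG hψ hGper hψper hψ0 hψ1] at hcd
  set b := dblInt (fun p => (ε - qOp (fun p => Φ p + s * ψ p) p) * ψ p) with hb
  change HasDerivAt _ b s
  -- Recentre the line at `s`, where the quadratic and cubic terms have zero derivative.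
  have hfun : (fun r : ℝ => energy ε (fun p => Φ p + r * ψ p)) = fun r : ℝ =>
      energy ε (fun p => Φ p + s * ψ p) + (r - s) * b + (r - s) ^ 2 * c + (r - s) ^ 3 * d := by
    funext r
    rw [← hcd (r - s)]
    congr 1
    funext p
    ring
  rw [hfun]
  have hid : HasDerivAt (fun r : ℝ => r - s) 1 s := (hasDerivAt_id s).sub_const s
  have := (((hid.mul_const b).const_add (energy ε (fun p => Φ p + s * ψ p))).add
    ((hid.pow 2).mul_const c)).add ((hid.pow 3).mul_const d)
  have hval : b = 1 * b + ((2 : ℕ) : ℝ) * (s - s) ^ (2 - 1) * 1 * c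
      + ((3 : ℕ) : ℝ) * (s - s) ^ (3 - 1) * 1 * d := by simp
  exact this.congr_deriv hval.symm
end

section
/- Fix n ≥ 1, ε > 0 and a point p ∈ ℝⁿ × ℝ. Let Φ₀, Φ₁ : ℝⁿ × ℝ → ℝ be twice differentiable at p, with ∂ₜ²Φ₀(p) > 0, ∂ₜ²Φ₁(p) > 0, and q(Φ₀)(p) = q(Φ₁)(p) = ε. Then for every s ∈ [0,1], q(sΦ₀ + (1−s)Φ₁)(p) ≥ ε. -/
/-- Second directional derivatives at a point of twice differentiability commute with
linear combinations. -/
lemma second_partial_combo {E : Type*} [NormedAddCommGroup E] [NormedSpace ℝ E]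
    {f g : E → ℝ} {p : E}
    (hf : ∀ᶠ q in nhds p, DifferentiableAt ℝ f q) (hg : ∀ᶠ q in nhds p, DifferentiableAt ℝ g q)
    (hf2 : DifferentiableAt ℝ (fderiv ℝ f) p) (hg2 : DifferentiableAt ℝ (fderiv ℝ g) p)
    (s t : ℝ) (v w : E) :
    fderiv ℝ (fun q => fderiv ℝ (fun x => s * f x + t * g x) q v) p w =
      s * fderiv ℝ (fun q => fderiv ℝ f q v) p w + t * fderiv ℝ (fun q => fderiv ℝ g q v) p w := by
  have h : (fun q => fderiv ℝ (fun x => s * f x + t * g x) q v) =ᶠ[nhds p]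
      fun q => s * fderiv ℝ f q v + t * fderiv ℝ g q v := by
    filter_upwards [hf, hg] with q h1 h2
    rw [((h1.hasFDerivAt.const_mul s).fun_add (h2.hasFDerivAt.const_mul t)).fderiv]
    simp
  have hfv : DifferentiableAt ℝ (fun q => fderiv ℝ f q v) p :=
    hf2.clm_apply (differentiableAt_const v)
  have hgv : DifferentiableAt ℝ (fun q => fderiv ℝ g q v) p :=
    hg2.clm_apply (differentiableAt_const v)
  rw [h.fderiv_eq, ((hfv.hasFDerivAt.const_mul s).fun_add (hgv.hasFDerivAt.const_mul t)).fderiv]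
  simp

/-- Reverse Cauchy–Schwarz inequality for the Lorentzian form `a b - |c|²`: after multiplication by
`a₀ a₁ > 0`, the difference of the two sides is `ε (a₀ - a₁)² + |a₀ c₁ - a₁ c₀|²`. -/
lemma lorentz_polar {ι : Type*} [Fintype ι] {ε a₀ a₁ b₀ b₁ : ℝ} {c₀ c₁ : ι → ℝ}
    (hε : 0 ≤ ε) (ha₀ : 0 < a₀) (ha₁ : 0 < a₁)
    (h₀ : a₀ * b₀ - ∑ i, c₀ i ^ 2 = ε) (h₁ : a₁ * b₁ - ∑ i, c₁ i ^ 2 = ε) :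
    2 * ε ≤ a₀ * b₁ + a₁ * b₀ - 2 * ∑ i, c₀ i * c₁ i := by
  have hsq : 0 ≤ ∑ i, (a₀ * c₁ i - a₁ * c₀ i) ^ 2 := Finset.sum_nonneg fun i _ => sq_nonneg _
  have hexp : ∑ i, (a₀ * c₁ i - a₁ * c₀ i) ^ 2 =
      a₀ ^ 2 * ∑ i, c₁ i ^ 2 + a₁ ^ 2 * ∑ i, c₀ i ^ 2 - 2 * a₀ * a₁ * ∑ i, c₀ i * c₁ i := by
    simp only [Finset.mul_sum, ← Finset.sum_add_distrib, ← Finset.sum_sub_distrib]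
    exact Finset.sum_congr rfl fun i _ => by ring
  have hid : a₀ * a₁ * (a₀ * b₁ + a₁ * b₀ - 2 * ∑ i, c₀ i * c₁ i - 2 * ε) =
      ε * (a₀ - a₁) ^ 2 + ∑ i, (a₀ * c₁ i - a₁ * c₀ i) ^ 2 := by
    rw [hexp]
    linear_combination a₁ ^ 2 * h₀ + a₀ ^ 2 * h₁
  have hnn : 0 ≤ a₀ * a₁ * (a₀ * b₁ + a₁ * b₀ - 2 * ∑ i, c₀ i * c₁ i - 2 * ε) := by
    rw [hid]; positivity
  linarith [nonneg_of_mul_nonneg_right hnn (mul_pos ha₀ ha₁)]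

/-- Pointwise convexity of the equation `q = ε` along linear paths: if `Φ₀, Φ₁` are twice
differentiable at `p`, with `∂ₜ²Φ₀(p), ∂ₜ²Φ₁(p) > 0` and `q(Φ₀)(p) = q(Φ₁)(p) = ε`, then
`q(sΦ₀ + (1−s)Φ₁)(p) ≥ ε` for every `s ∈ [0,1]`. -/
theorem qOp_convex_at_point {n : ℕ} (hn : 1 ≤ n) (ε : ℝ) (hε : 0 < ε)
    (p : (Fin n → ℝ) × ℝ) (Φ₀ Φ₁ : (Fin n → ℝ) × ℝ → ℝ)
    (hΦ₀d : ∀ᶠ q in nhds p, DifferentiableAt ℝ Φ₀ q)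
    (hΦ₁d : ∀ᶠ q in nhds p, DifferentiableAt ℝ Φ₁ q)
    (hΦ₀d2 : DifferentiableAt ℝ (fderiv ℝ Φ₀) p)
    (hΦ₁d2 : DifferentiableAt ℝ (fderiv ℝ Φ₁) p)
    (h₀pos : 0 < pdt (pdt Φ₀) p) (h₁pos : 0 < pdt (pdt Φ₁) p)
    (h₀ : qOp Φ₀ p = ε) (h₁ : qOp Φ₁ p = ε) :
    ∀ s ∈ Set.Icc (0 : ℝ) 1, ε ≤ qOp (fun q => s * Φ₀ q + (1 - s) * Φ₁ q) p := by
  rintro s ⟨hs0, hs1⟩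
  have key := second_partial_combo hΦ₀d hΦ₁d hΦ₀d2 hΦ₁d2 s (1 - s)
  have htt : pdt (pdt fun q => s * Φ₀ q + (1 - s) * Φ₁ q) p =
      s * pdt (pdt Φ₀) p + (1 - s) * pdt (pdt Φ₁) p := key _ _
  have hxx : ∀ i, pdx i (pdx i fun q => s * Φ₀ q + (1 - s) * Φ₁ q) p =
      s * pdx i (pdx i Φ₀) p + (1 - s) * pdx i (pdx i Φ₁) p := fun i => key _ _
  have hxt : ∀ i, pdx i (pdt fun q => s * Φ₀ q + (1 - s) * Φ₁ q) p =
      s * pdx i (pdt Φ₀) p + (1 - s) * pdx i (pdt Φ₁) p := fun i => key _ _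
  have hpol := lorentz_polar hε.le h₀pos h₁pos h₀ h₁
  have hsum : ∑ i, (s * pdx i (pdt Φ₀) p + (1 - s) * pdx i (pdt Φ₁) p) ^ 2 =
      s ^ 2 * ∑ i, pdx i (pdt Φ₀) p ^ 2 + (1 - s) ^ 2 * ∑ i, pdx i (pdt Φ₁) p ^ 2 +
        2 * s * (1 - s) * ∑ i, pdx i (pdt Φ₀) p * pdx i (pdt Φ₁) p := by
    simp only [Finset.mul_sum, ← Finset.sum_add_distrib]
    exact Finset.sum_congr rfl fun i _ => by ring
  unfold qOp at h₀ h₁ ⊢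
  simp only [htt, hxx, hxt, hsum, Finset.sum_add_distrib, ← Finset.mul_sum]
  -- `q(sΦ₀ + (1-s)Φ₁) = s² ε + (1-s)² ε + s(1-s) · (polar term)`, and the polar term is `≥ 2ε`.
  have hm := mul_le_mul_of_nonneg_left hpol (mul_nonneg hs0 (sub_nonneg.2 hs1))
  linear_combination hm - s ^ 2 * h₀ - (1 - s) ^ 2 * h₁
end

section
/- Fix n ≥ 1 and ε > 0. Let Ω ⊆ ℝⁿ × ℝ be open, Φ : ℝⁿ × ℝ → ℝ a C³ function and T : Ω → ℝ a C¹ function such that for all (x,z) ∈ Ω: ∂ₜΦ(x, T(x,z)) = z and ∂ₜ²Φ(x, T(x,z)) > 0, and such that q(Φ) = ε at each point (x, T(x,z)). Define U : Ω → ℝ by U(x,z) = Φ(x,0) − Φ(x, T(x,z)) + z·T(x,z). Then at every point of Ω: ∂_zU = T, ∂_z²U·∂ₜ²Φ(x,T(x,z)) = 1, and ε·∂_z²U + Σᵢ₌₁ⁿ ∂ᵢ²U = 1 + Σᵢ₌₁ⁿ ∂ᵢ²Φ(x,0). -/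
/-- Chain rule along the graph `p ↦ (x, T p)` with `p = (x, z)`, splitting off the `∂ₜ` term. -/
theorem fderiv_graph_apply {n : ℕ} {f T : (Fin n → ℝ) × ℝ → ℝ} {p : (Fin n → ℝ) × ℝ}
    (hf : DifferentiableAt ℝ f (p.1, T p)) (hT : DifferentiableAt ℝ T p)
    (v : (Fin n → ℝ) × ℝ) :
    fderiv ℝ (fun q : (Fin n → ℝ) × ℝ => f (q.1, T q)) p v =
      fderiv ℝ f (p.1, T p) (v.1, 0) + pdt f (p.1, T p) * fderiv ℝ T p v := by
  have hG : HasFDerivAt (fun q : (Fin n → ℝ) × ℝ => (q.1, T q))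
      ((ContinuousLinearMap.fst ℝ (Fin n → ℝ) ℝ).prod (fderiv ℝ T p)) p :=
    hasFDerivAt_fst.prodMk hT.hasFDerivAt
  have h := HasFDerivAt.comp (g := f) p hf.hasFDerivAt hG
  have h2 : fderiv ℝ (fun q : (Fin n → ℝ) × ℝ => f (q.1, T q)) p = _ := h.fderiv
  have hsplit : ((v.1, fderiv ℝ T p v) : (Fin n → ℝ) × ℝ) =
      (v.1, 0) + fderiv ℝ T p v • (0, 1) := by
    ext <;> simp
  rw [h2]
  change fderiv ℝ f (p.1, T p) (v.1, fderiv ℝ T p v) = _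
  rw [hsplit, map_add, map_smul, smul_eq_mul, pdt, mul_comm]

theorem differentiableAt_graph {n : ℕ} {f T : (Fin n → ℝ) × ℝ → ℝ} {p : (Fin n → ℝ) × ℝ}
    (hf : DifferentiableAt ℝ f (p.1, T p)) (hT : DifferentiableAt ℝ T p) :
    DifferentiableAt ℝ (fun q : (Fin n → ℝ) × ℝ => f (q.1, T q)) p :=
  DifferentiableAt.comp (g := f) p hf (differentiableAt_fst.prodMk hT)

/-- First derivative of the Legendre transform: the terms containing the derivative of `T` cancel
because `∂ₜΦ = z` at `(x, T)`. -/
theorem fderiv_legendre_apply {n : ℕ} {Φ T : (Fin n → ℝ) × ℝ → ℝ} {p : (Fin n → ℝ) × ℝ}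
    (hΦ : Differentiable ℝ Φ) (hT : DifferentiableAt ℝ T p)
    (hleg : pdt Φ (p.1, T p) = p.2) (v : (Fin n → ℝ) × ℝ) :
    fderiv ℝ (fun q : (Fin n → ℝ) × ℝ => Φ (q.1, 0) - Φ (q.1, T q) + q.2 * T q) p v =
      fderiv ℝ Φ (p.1, 0) (v.1, 0) - fderiv ℝ Φ (p.1, T p) (v.1, 0) + v.2 * T p := by
  have h0 : DifferentiableAt ℝ (fun q : (Fin n → ℝ) × ℝ => Φ (q.1, 0)) p :=
    differentiableAt_graph (T := fun _ => 0) (hΦ _) (differentiableAt_const 0)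
  have e0 := fderiv_graph_apply (T := fun _ => 0) (hΦ (p.1, 0)) (differentiableAt_const 0) v
  have h1 := differentiableAt_graph (hΦ (p.1, T p)) hT
  have e1 := fderiv_graph_apply (hΦ (p.1, T p)) hT v
  have h2 := (hasFDerivAt_snd (𝕜 := ℝ) (p := p)).mul hT.hasFDerivAt
  have h := ((h0.hasFDerivAt.sub h1.hasFDerivAt).add h2).fderiv
  have h' : fderiv ℝ (fun q : (Fin n → ℝ) × ℝ => Φ (q.1, 0) - Φ (q.1, T q) + q.2 * T q) p = _ := h
  rw [h']
  simp only [add_apply, sub_apply, smul_apply, ContinuousLinearMap.coe_snd', smul_eq_mul]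
  rw [e0, e1, hleg]
  simp
  ring

theorem contDiff_fderiv_apply {n : ℕ} {Φ : (Fin n → ℝ) × ℝ → ℝ} (hΦ : ContDiff ℝ 3 Φ)
    (v : (Fin n → ℝ) × ℝ) : ContDiff ℝ 2 (fun p => fderiv ℝ Φ p v) :=
  (hΦ.fderiv_right (m := 2) (by norm_num)).clm_apply contDiff_const

/-- Symmetry of second derivatives. -/
theorem pdt_pdx_comm {n : ℕ} {Φ : (Fin n → ℝ) × ℝ → ℝ} (hΦ : ContDiff ℝ 3 Φ)
    (i : Fin n) (p : (Fin n → ℝ) × ℝ) : pdt (pdx i Φ) p = pdx i (pdt Φ) p := by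
  have hd : DifferentiableAt ℝ (fderiv ℝ Φ) p :=
    (hΦ.fderiv_right (m := 2) (by norm_num)).differentiable (by norm_num) p
  have key : ∀ v w : (Fin n → ℝ) × ℝ,
      fderiv ℝ (fun q => fderiv ℝ Φ q v) p w = fderiv ℝ (fderiv ℝ Φ) p w v := by
    intro v w
    rw [fderiv_clm_apply hd (differentiableAt_const v)]
    simp
  have hs : IsSymmSndFDerivAt ℝ Φ p :=
    hΦ.contDiffAt.isSymmSndFDerivAt (by simp; norm_num)
  exact (key _ _).trans ((hs.eq _ _).trans (key _ _).symm)

/-- Legendre transform from the Φ-equation to the U-equation: with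
`U(x,z) = Φ(x,0) − Φ(x,T(x,z)) + z·T(x,z)` where `∂ₜΦ(x,T(x,z)) = z`, one has
`∂_zU = T`, `∂_z²U · ∂ₜ²Φ = 1`, and `ε∂_z²U + Σᵢ ∂ᵢ²U = 1 + Σᵢ ∂ᵢ²Φ(·,0)`. -/
theorem legendre_transform_U_equation {n : ℕ} (hn : 1 ≤ n) (ε : ℝ) (hε : 0 < ε)
    (Ω : Set ((Fin n → ℝ) × ℝ)) (hΩ : IsOpen Ω)
    (Φ : (Fin n → ℝ) × ℝ → ℝ) (hΦ : ContDiff ℝ 3 Φ)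
    (T : (Fin n → ℝ) × ℝ → ℝ) (hT : ContDiffOn ℝ 1 T Ω)
    (hleg : ∀ p ∈ Ω, pdt Φ (p.1, T p) = p.2)
    (hconv : ∀ p ∈ Ω, 0 < pdt (pdt Φ) (p.1, T p))
    (heq : ∀ p ∈ Ω, qOp Φ (p.1, T p) = ε)
    (U : (Fin n → ℝ) × ℝ → ℝ)
    (hU : ∀ p : (Fin n → ℝ) × ℝ, U p = Φ (p.1, 0) - Φ (p.1, T p) + p.2 * T p) :
    ∀ p ∈ Ω,
      pdt U p = T p ∧
      pdt (pdt U) p * pdt (pdt Φ) (p.1, T p) = 1 ∧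
      ε * pdt (pdt U) p + ∑ i : Fin n, pdx i (pdx i U) p =
        1 + ∑ i : Fin n, pdx i (pdx i Φ) (p.1, 0) := by
  intro p hp
  have hΦd : Differentiable ℝ Φ := hΦ.differentiable (by norm_num)
  have hTd : ∀ q ∈ Ω, DifferentiableAt ℝ T q := fun q hq =>
    (hT.contDiffAt (hΩ.mem_nhds hq)).differentiableAt (by norm_num)
  have hdt : Differentiable ℝ (pdt Φ) :=
    (contDiff_fderiv_apply hΦ (0, 1)).differentiable (by norm_num)
  have hdx : ∀ i, Differentiable ℝ (pdx i Φ) := fun i =>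
    (contDiff_fderiv_apply hΦ (Pi.single i 1, 0)).differentiable (by norm_num)
  obtain rfl : U = fun q => Φ (q.1, 0) - Φ (q.1, T q) + q.2 * T q := funext hU
  set U : (Fin n → ℝ) × ℝ → ℝ := fun q => Φ (q.1, 0) - Φ (q.1, T q) + q.2 * T q with hUdef
  have hUt : ∀ q ∈ Ω, pdt U q = T q := by
    intro q hq
    have h := fderiv_legendre_apply hΦd (hTd q hq) (hleg q hq) (0, 1)
    have z : ((0, 0) : (Fin n → ℝ) × ℝ) = 0 := rfl
    simpa [z, pdt, hUdef] using h
  have hUx : ∀ i, ∀ q ∈ Ω, pdx i U q = pdx i Φ (q.1, 0) - pdx i Φ (q.1, T q) := by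
    intro i q hq
    have h := fderiv_legendre_apply hΦd (hTd q hq) (hleg q hq) (Pi.single i 1, 0)
    simpa [pdx, hUdef] using h
  have hUtt : pdt (pdt U) p = pdt T p := by
    have e : pdt U =ᶠ[nhds p] T := Filter.eventuallyEq_of_mem (hΩ.mem_nhds hp) hUt
    rw [pdt, e.fderiv_eq, ← pdt]
  have hUxx : ∀ i, pdx i (pdx i U) p = pdx i (pdx i Φ) (p.1, 0) -
      (pdx i (pdx i Φ) (p.1, T p) + pdx i (pdt Φ) (p.1, T p) * pdx i T p) := by
    intro i
    have e : pdx i U =ᶠ[nhds p] fun q => pdx i Φ (q.1, 0) - pdx i Φ (q.1, T q) :=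
      Filter.eventuallyEq_of_mem (hΩ.mem_nhds hp) (hUx i)
    have h0 : DifferentiableAt ℝ (fun q : (Fin n → ℝ) × ℝ => pdx i Φ (q.1, 0)) p :=
      differentiableAt_graph (T := fun _ => 0) (hdx i _) (differentiableAt_const 0)
    have e0 := fderiv_graph_apply (T := fun _ => 0) (hdx i (p.1, 0))
      (differentiableAt_const 0) (Pi.single i 1, 0)
    have h1 := differentiableAt_graph (hdx i (p.1, T p)) (hTd p hp)
    have e1 := fderiv_graph_apply (hdx i (p.1, T p)) (hTd p hp) (Pi.single i 1, 0)
    have h := congrArg (fun L => L (Pi.single i 1, 0))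
      (e.fderiv_eq.trans (h0.hasFDerivAt.sub h1.hasFDerivAt).fderiv)
    simp only [sub_apply] at h
    rw [e0, e1, pdt_pdx_comm hΦ i (p.1, T p)] at h
    simpa [pdx] using h
  -- The derivative of the identity `∂ₜΦ(x, T(x,z)) = z`.
  have hlegd : ∀ v : (Fin n → ℝ) × ℝ, fderiv ℝ (pdt Φ) (p.1, T p) (v.1, 0) +
      pdt (pdt Φ) (p.1, T p) * fderiv ℝ T p v = v.2 := by
    intro v
    have e : (fun q : (Fin n → ℝ) × ℝ => pdt Φ (q.1, T q)) =ᶠ[nhds p] Prod.snd :=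
      Filter.eventuallyEq_of_mem (hΩ.mem_nhds hp) hleg
    rw [← fderiv_graph_apply (hdt _) (hTd p hp) v, e.fderiv_eq, fderiv_snd]
    rfl
  have hz : pdt (pdt Φ) (p.1, T p) * pdt T p = 1 := by
    have h := hlegd (0, 1)
    have z : ((0, 0) : (Fin n → ℝ) × ℝ) = 0 := rfl
    simpa [z, pdt] using h
  have hx : ∀ i, pdx i (pdt Φ) (p.1, T p) + pdt (pdt Φ) (p.1, T p) * pdx i T p = 0 :=
    fun i => hlegd (Pi.single i 1, 0)
  refine ⟨hUt p hp, by rw [hUtt, mul_comm]; exact hz, ?_⟩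
  have hq := heq p hp
  rw [qOp] at hq
  rw [hUtt]
  -- `∂ᵢT = −∂ᵢ∂ₜΦ · ∂_zT`, because `∂_zT` is the inverse of `∂ₜ²Φ`.
  have hTi : ∀ i, pdx i T p = - pdx i (pdt Φ) (p.1, T p) * pdt T p := by
    intro i
    linear_combination pdt T p * hx i - pdx i T p * hz
  have hsum : ∑ i, pdx i (pdx i U) p = ∑ i, pdx i (pdx i Φ) (p.1, 0) -
      ∑ i, pdx i (pdx i Φ) (p.1, T p) +
        (∑ i, (pdx i (pdt Φ) (p.1, T p)) ^ 2) * pdt T p := by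
    rw [Finset.sum_mul, ← Finset.sum_sub_distrib, ← Finset.sum_add_distrib]
    refine Finset.sum_congr rfl fun i _ => ?_
    rw [hUxx, hTi]
    ring
  rw [hsum]
  linear_combination (1 + ∑ i, pdx i (pdx i Φ) (p.1, T p)) * hz - pdt T p * hq
end

section
/- Fix N ≥ 1 and let T₁, T₂, T₃ : ℝ → M_N(ℂ) be differentiable matrix-valued functions satisfying Nahm's equations dT₁/dt = [T₂,T₃], dT₂/dt = [T₃,T₁], dT₃/dt = [T₁,T₂], where [A,B] = AB − BA. Then the characteristic polynomial of T₂(t) + iT₃(t) is independent of t: for all s, t ∈ ℝ, charpoly(T₂(s) + iT₃(s)) = charpoly(T₂(t) + iT₃(t)). -/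
/-!
With `A = T₂ + iT₃`, Nahm's equations give the Lax equation `A' = [iT₁, A]`. For a fixed scalar `z`
the matrix `M = z - A` satisfies `M' = [iT₁, M]` as well, so by Jacobi's formula
`(det M)' = tr (adj M * [B, M])` with `B = iT₁`. Since `adj M * M = M * adj M = det M`, this trace
vanishes by cyclicity. Hence `det (z - A t)` is constant in `t` for every `z`, and a polynomial
over `ℂ` is determined by its values.
-/

attribute [local instance] Matrix.normedAddCommGroup Matrix.normedSpace

/-- Jacobi's formula for the derivative of a determinant along a curve of matrices. -/
theorem hasDerivAt_det_jacobi {N : ℕ} {M : ℝ → Matrix (Fin N) (Fin N) ℂ}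
    {M' : Matrix (Fin N) (Fin N) ℂ} {t : ℝ} (h : HasDerivAt M M' t) :
    HasDerivAt (fun s => (M s).det) ((M t).adjugate * M').trace t := by
  -- The determinant is a continuous multilinear map of the rows, here viewed over `ℝ`.
  let D : ContinuousMultilinearMap ℂ (fun _ : Fin N => Fin N → ℂ) ℂ :=
    { (Matrix.detRowAlternating (n := Fin N) (R := ℂ)).toMultilinearMap with
      cont := Continuous.matrix_det (A := fun X : Matrix (Fin N) (Fin N) ℂ => X) continuous_id }
  have hD := ((D.restrictScalars ℝ).hasFDerivAt (M t)).comp_hasDerivAt t h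
  refine hD.congr_deriv ?_
  refine (ContinuousMultilinearMap.linearDeriv_apply _ _ _).trans ?_
  calc _ = ∑ i, ((M t).updateRow i (M' i)).det := rfl
    _ = ∑ i, ∑ j, (M t).adjugate j i * M' i j := by
        refine Finset.sum_congr rfl fun i _ => ?_
        rw [← Matrix.cramer_transpose_apply, Matrix.cramer_eq_adjugate_mulVec,
          ← Matrix.adjugate_transpose]
        rfl
    _ = _ := by
        rw [Finset.sum_comm]
        rfl

/-- The derivative in Jacobi's formula vanishes in the direction of a commutator with `M`. -/
theorem trace_adjugate_mul_commutator {N : ℕ} (M B : Matrix (Fin N) (Fin N) ℂ) :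
    (M.adjugate * (B * M - M * B)).trace = 0 := by
  rw [mul_sub, Matrix.trace_sub, ← mul_assoc, ← mul_assoc, Matrix.trace_mul_comm, ← mul_assoc,
    Matrix.mul_adjugate, Matrix.adjugate_mul, sub_self]

/-- If `T₁, T₂, T₃` satisfy Nahm's equations `dTᵢ/dt = [Tⱼ,Tₖ]` (for `(i,j,k)` cyclic
permutations of `(1,2,3)`), then the characteristic polynomial of `T₂ + iT₃` is
independent of `t`. -/
theorem nahm_charpoly_invariant {N : ℕ} (hN : 1 ≤ N)
    (T₁ T₂ T₃ : ℝ → Matrix (Fin N) (Fin N) ℂ)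
    (h1 : ∀ t : ℝ, HasDerivAt T₁ (T₂ t * T₃ t - T₃ t * T₂ t) t)
    (h2 : ∀ t : ℝ, HasDerivAt T₂ (T₃ t * T₁ t - T₁ t * T₃ t) t)
    (h3 : ∀ t : ℝ, HasDerivAt T₃ (T₁ t * T₂ t - T₂ t * T₁ t) t) :
    ∀ s t : ℝ,
      (T₂ s + Complex.I • T₃ s).charpoly = (T₂ t + Complex.I • T₃ t).charpoly := by
  intro s t
  refine Polynomial.funext fun z => ?_
  rw [Matrix.eval_charpoly, Matrix.eval_charpoly]
  have hM : ∀ u, HasDerivAt (fun u => Matrix.scalar (Fin N) z - (T₂ u + Complex.I • T₃ u))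
      ((Complex.I • T₁ u) * (Matrix.scalar (Fin N) z - (T₂ u + Complex.I • T₃ u))
        - (Matrix.scalar (Fin N) z - (T₂ u + Complex.I • T₃ u)) * (Complex.I • T₁ u)) u := by
    intro u
    have h3' : HasDerivAt (fun u => Complex.I • T₃ u)
        (Complex.I • (T₁ u * T₂ u - T₂ u * T₁ u)) u :=
      HasDerivAt.const_smul (F := Matrix (Fin N) (Fin N) ℂ) Complex.I (h3 u)
    refine (((h2 u).add h3').const_sub _).congr_deriv ?_
    have hc : Matrix.scalar (Fin N) z * (Complex.I • T₁ u)
        = (Complex.I • T₁ u) * Matrix.scalar (Fin N) z :=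
      (Matrix.scalar_commute z (fun _ => Commute.all _ _) _).eq
    rw [mul_sub, sub_mul, hc]
    simp only [mul_add, add_mul, smul_mul_assoc, mul_smul_comm, smul_smul, Complex.I_mul_I,
      smul_sub, smul_add, neg_smul, one_smul]
    abel
  have hd : ∀ u, HasDerivAt
      (fun u => (Matrix.scalar (Fin N) z - (T₂ u + Complex.I • T₃ u)).det) 0 u := fun u =>
    (hasDerivAt_det_jacobi (hM u)).congr_deriv (trace_adjugate_mul_commutator _ _)
  exact is_const_of_deriv_eq_zero (fun u => (hd u).differentiableAt) (fun u => (hd u).deriv) s t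
end

section
/- Fix n ≥ 1. Let Φ : ℝⁿ × [0,1] → ℝ be a smooth function, ℤⁿ-periodic in x, satisfying 1 + Σᵢ₌₁ⁿ ∂ᵢ²Φ > 0 everywhere and the geodesic equation (∂ₜ²Φ)·(1 + Σᵢ ∂ᵢ²Φ) = Σᵢ (∂ᵢ∂ₜΦ)². Then the function V(t) = ∫_{[0,1]ⁿ} Φ(x,t) dx is convex on [0,1]. -/
/-!
Since `1 + Σᵢ∂ᵢ²Φ > 0`, the geodesic equation exhibits `∂ₜ²Φ` as a sum of squares divided by a
positive number, so for each fixed `x` the function `t ↦ Φ (x, t)` is convex on `[0,1]`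
(`convexOn_slice`). An integral of convex functions is convex: the pointwise convexity inequality
integrates over the compact cube, on which the continuous slices `Φ (·, t)` are integrable.
-/

open MeasureTheory

lemma hasDerivAt_slice {n : ℕ} {f : (Fin n → ℝ) × ℝ → ℝ} (hf : Differentiable ℝ f)
    (x : Fin n → ℝ) (t : ℝ) : HasDerivAt (fun s => f (x, s)) (pdt f (x, t)) t := by
  have h : HasDerivAt (fun s : ℝ => (x, s)) ((0 : Fin n → ℝ), (1 : ℝ)) t :=
    (hasDerivAt_const t x).prodMk (hasDerivAt_id t)
  exact (hf (x, t)).hasFDerivAt.comp_hasDerivAt t h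

lemma differentiable_pdt {n : ℕ} {f : (Fin n → ℝ) × ℝ → ℝ}
    (hf : ContDiff ℝ (⊤ : ℕ∞) f) : Differentiable ℝ (pdt f) := by
  have h : ContDiff ℝ 1 (fderiv ℝ f) := hf.fderiv_right (WithTop.coe_le_coe.2 (le_top : (1 + 1 : ℕ∞) ≤ ⊤))
  exact (h.differentiable one_ne_zero).clm_apply (differentiable_const _)

lemma convexOn_slice {n : ℕ} {f : (Fin n → ℝ) × ℝ → ℝ} (hf : ContDiff ℝ (⊤ : ℕ∞) f)
    (x : Fin n → ℝ) (h : ∀ t ∈ Set.Icc (0 : ℝ) 1, 0 ≤ pdt (pdt f) (x, t)) :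
    ConvexOn ℝ (Set.Icc (0 : ℝ) 1) (fun t => f (x, t)) := by
  have hd : Differentiable ℝ f := hf.differentiable (by simp)
  refine convexOn_of_hasDerivWithinAt2_nonneg (convex_Icc 0 1)
    (f' := fun t => pdt f (x, t)) (f'' := fun t => pdt (pdt f) (x, t)) ?_ ?_ ?_ ?_
  · exact (hf.continuous.comp (Continuous.prodMk_right x)).continuousOn
  · exact fun t _ => (hasDerivAt_slice hd x t).hasDerivWithinAt
  · exact fun t _ => (hasDerivAt_slice (differentiable_pdt hf) x t).hasDerivWithinAt
  · exact fun t ht => h t (interior_subset ht)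

/-- Along a geodesic of the space `ℋ` (a smooth `ℤⁿ`-periodic solution of
`∂ₜ²Φ·(1 + Σᵢ∂ᵢ²Φ) = Σᵢ(∂ᵢ∂ₜΦ)²` with `1 + Σᵢ∂ᵢ²Φ > 0`), the potential
`V(t) = ∫_{[0,1]ⁿ} Φ(x,t) dx` is convex on `[0,1]`. -/
theorem potential_convex_along_geodesics {n : ℕ} (hn : 1 ≤ n)
    (Φ : (Fin n → ℝ) × ℝ → ℝ) (hΦ : ContDiff ℝ (⊤ : ℕ∞) Φ)
    (hper : ∀ (k : Fin n → ℤ) (x : Fin n → ℝ) (t : ℝ),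
      Φ (x + fun i => (k i : ℝ), t) = Φ (x, t))
    (hpos : ∀ x : Fin n → ℝ, ∀ t ∈ Set.Icc (0 : ℝ) 1,
      0 < 1 + ∑ i : Fin n, pdx i (pdx i Φ) (x, t))
    (hgeo : ∀ x : Fin n → ℝ, ∀ t ∈ Set.Icc (0 : ℝ) 1,
      pdt (pdt Φ) (x, t) * (1 + ∑ i : Fin n, pdx i (pdx i Φ) (x, t)) =
        ∑ i : Fin n, (pdx i (pdt Φ) (x, t)) ^ 2) :
    ConvexOn ℝ (Set.Icc (0 : ℝ) 1)
      (fun t => ∫ x in Set.Icc (0 : Fin n → ℝ) 1, Φ (x, t)) := by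
  have hconv : ∀ x : Fin n → ℝ, ConvexOn ℝ (Set.Icc (0 : ℝ) 1) (fun t => Φ (x, t)) := by
    refine fun x => convexOn_slice hΦ x fun t ht => ?_
    refine nonneg_of_mul_nonneg_left ?_ (hpos x t ht)
    rw [hgeo x t ht]
    positivity
  have hint : ∀ t : ℝ, IntegrableOn (fun x => Φ (x, t)) (Set.Icc (0 : Fin n → ℝ) 1) := fun t =>
    (hΦ.continuous.comp (Continuous.prodMk_left t)).continuousOn.integrableOn_compact isCompact_Icc
  refine ⟨convex_Icc 0 1, fun s hs t ht a b ha hb hab => ?_⟩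
  simp only [smul_eq_mul]
  rw [← integral_const_mul, ← integral_const_mul,
    ← integral_add ((hint s).const_mul a) ((hint t).const_mul b)]
  exact integral_mono (hint _) (((hint s).const_mul a).add ((hint t).const_mul b))
    fun x => (hconv x).2 hs ht ha hb hab
end
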